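/- arXiv:1410.8198 — 4 statements merged into one kernel-verified Lean document; each statement's English description precedes it below -/
import Mathlib

section
/- Fix integers k ≥ m ≥ 1 and assume that every admissible k-tuple of distinct integers contains a Dickson m-tuple, i.e., for every admissible k-tuple (x_1,…,x_k) of distinct integers there exist distinct indices i_1,…,i_m ∈ {1,…,k} such that (x_{i_1},…,x_{i_m}) is a Dickson m-tuple. Let R = ∏_{p ≤ k, p prime} p and let φ be Euler's totient function. Then liminf_{x→∞} #{(h_1,…,h_m) ∈ ((−x,x] ∩ ℤ)^m : (h_1,…,h_m) is a Dickson m-tuple} / (2x)^m ≥ (φ(R)/(kR))^m; in particular, a positive proportion of m-tuples of integers are Dickson m-tuples. -/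
/-!
Let `S` be a set of integers of density `δ > 0`, any `k` distinct elements of which contain an
`m`-tuple with some property `P`. Fix `k` distinct elements of `S ∩ (-x, x]` and apply a random
permutation `σ` of that finite set: for each `σ` one of the `k(k-1)⋯(k-m+1)` sub-`m`-tuples of the
image has `P`, while the image of each fixed sub-`m`-tuple is equidistributed among the injective
`m`-tuples. So a proportion at least `1 / (k(k-1)⋯(k-m+1)) ≥ 1 / k ^ m` of the injective `m`-tuples
of `S ∩ (-x, x]` have `P`, and these number `∼ (2 δ x) ^ m`. For the theorem `S` is the set of
integers coprime to all primes `p ≤ k`: it has density `φ(R) / R`, and any `k` of its elements form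
an admissible tuple, since they avoid `0` modulo `p ≤ k` and are too few to cover the residues
modulo `p > k`.
-/

open Filter

/-- A `k`-tuple of integers is admissible if for every prime `p` its entries
do not cover all residue classes mod `p`. -/
def AdmissibleTuple {k : ℕ} (x : Fin k → ℤ) : Prop :=
  ∀ p : ℕ, p.Prime → ∃ r : ZMod p, ∀ i, (x i : ZMod p) ≠ r

/-- An `m`-tuple of integers is a Dickson tuple if there are infinitely many `n`
making all of `n + h i` prime. -/
def DicksonTuple {m : ℕ} (h : Fin m → ℤ) : Prop :=
  {n : ℤ | ∀ i, Prime (n + h i)}.Infinite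

open Topology

section Averaging

open MulAction

variable {G X : Type*} [Group G] [MulAction G X] [IsPretransitive G X]

theorem natCard_smul_mem (y : X) (A : Set X) :
    Nat.card {g : G // g • y ∈ A} = Nat.card (stabilizer G y) * Nat.card A := by
  let e : X ≃ G ⧸ stabilizer G y :=
    (Equiv.Set.univ X).symm.trans <|
      (Equiv.setCongr (orbit_eq_univ G y).symm).trans (orbitEquivQuotientStabilizer G y)
  have smul_eq (g : G) : e.symm g = g • y := orbitEquivQuotientStabilizer_symm_apply G y g
  calc Nat.card {g : G // g • y ∈ A}
      = Nat.card ((↑) ⁻¹' (e.symm ⁻¹' A) : Set G) :=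
        Nat.card_congr <| Equiv.subtypeEquivRight fun g => by
          rw [Set.mem_preimage, Set.mem_preimage, smul_eq]
    _ = Nat.card (stabilizer G y) * Nat.card (e.symm ⁻¹' A) := by
        rw [Nat.card_congr (QuotientGroup.preimageMkEquivSubgroupProdSet _ _), Nat.card_prod]
    _ = Nat.card (stabilizer G y) * Nat.card A := by
        rw [Nat.card_preimage_of_injective e.symm.injective (by simp)]

theorem natCard_smul_mem_mul_natCard [Finite G] (y : X) (A : Set X) :
    Nat.card {g : G // g • y ∈ A} * Nat.card X = Nat.card G * Nat.card A := by
  rw [natCard_smul_mem, mul_right_comm, mul_comm (Nat.card (stabilizer G y)),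
    ← index_stabilizer_of_transitive G y, Subgroup.index_mul_card]

theorem natCard_le_mul_of_forall_exists_smul_mem [Finite G] {T : Type*} [Finite T] (y : T → X)
    (A : Set X) (h : ∀ g : G, ∃ t, g • y t ∈ A) : Nat.card X ≤ Nat.card T * Nat.card A := by
  have : Fintype T := Fintype.ofFinite T
  choose t ht using h
  have card_le_sum : Nat.card G ≤ ∑ t, Nat.card {g : G // g • y t ∈ A} := by
    rw [← Nat.card_sigma]
    exact Nat.card_le_card_of_injective
      (fun g => (⟨t g, g, ht g⟩ : Σ t, {g : G // g • y t ∈ A}))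
      fun g g' hgg' => congrArg (fun s => (s.2 : G)) hgg'
  refine Nat.le_of_mul_le_mul_left ?_ (Nat.card_pos (α := G))
  calc Nat.card G * Nat.card X
      ≤ (∑ t, Nat.card {g : G // g • y t ∈ A}) * Nat.card X := by gcongr
    _ = Nat.card G * (Nat.card T * Nat.card A) := by
        simp only [Finset.sum_mul, natCard_smul_mem_mul_natCard, Finset.sum_const,
          Finset.card_univ, Nat.card_eq_fintype_card, smul_eq_mul, mul_left_comm]

theorem descFactorial_natCard_le_mul {α : Type*} [Finite α] {m k : ℕ} (hk : k ≤ Nat.card α)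
    (A : Set (Fin m ↪ α)) (h : ∀ x : Fin k ↪ α, ∃ f : Fin m ↪ Fin k, f.trans x ∈ A) :
    (Nat.card α).descFactorial m ≤ k.descFactorial m * Nat.card A := by
  have : Fintype α := Fintype.ofFinite α
  obtain ⟨x⟩ : Nonempty (Fin k ↪ α) := Function.Embedding.nonempty_of_card_le <| by
    rwa [Fintype.card_fin, ← Nat.card_eq_fintype_card]
  have : IsPretransitive (Equiv.Perm α) (Fin m ↪ α) := Equiv.Perm.isMultiplyPretransitive α m
  have card_le := natCard_le_mul_of_forall_exists_smul_mem (G := Equiv.Perm α)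
    (fun f : Fin m ↪ Fin k => f.trans x) A fun σ => h (x.trans σ.toEmbedding)
  simpa only [Nat.card_eq_fintype_card, Fintype.card_embedding_eq, Fintype.card_fin] using card_le

end Averaging

section Density

/-- `HasDensity S δ` means that the set `S` of integers has natural density `δ`, measured along
the symmetric intervals `(-x, x]`. -/
def HasDensity (S : Set ℤ) (δ : ℝ) : Prop :=
  Tendsto (fun x : ℕ => ((S ∩ Set.Ioc (-x : ℤ) x).ncard : ℝ) / (2 * x)) atTop (𝓝 δ)

theorem HasDensity.biUnion {ι : Type*} {t : Finset ι} {S : ι → Set ℤ} {δ : ι → ℝ}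
    (hS : ∀ i ∈ t, HasDensity (S i) (δ i)) (hdisj : (t : Set ι).PairwiseDisjoint S) :
    HasDensity (⋃ i ∈ t, S i) (∑ i ∈ t, δ i) := by
  refine (tendsto_finsetSum t hS).congr fun x => ?_
  have ncard_eq : ((⋃ i ∈ t, S i) ∩ Set.Ioc (-x : ℤ) x).ncard =
      ∑ i ∈ t, (S i ∩ Set.Ioc (-x : ℤ) x).ncard := by
    rw [Set.iUnion₂_inter, ← finsum_mem_coe_finset]
    exact t.finite_toSet.ncard_biUnion (fun i _ => (Set.finite_Ioc _ _).inter_of_right _)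
      (hdisj.mono fun i => Set.inter_subset_left)
  rw [ncard_eq, Nat.cast_sum, Finset.sum_div]

theorem abs_ncard_modEq_inter_Ioc_sub_le {r : ℕ} (hr : 0 < r) {a b : ℤ} (hab : a ≤ b) (v : ℤ) :
    |(({n : ℤ | n ≡ v [ZMOD r]} ∩ Set.Ioc a b).ncard : ℝ) - (b - a) / r| ≤ 1 := by
  set N := ({n : ℤ | n ≡ v [ZMOD r]} ∩ Set.Ioc a b).ncard with hN
  have eq_floor_sub : (N : ℤ) = ⌊(b - v) / (r : ℚ)⌋ - ⌊(a - v) / (r : ℚ)⌋ := by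
    have : {n : ℤ | n ≡ v [ZMOD r]} ∩ Set.Ioc a b = ↑{n ∈ Finset.Ioc a b | n ≡ v [ZMOD r]} := by
      rw [Finset.coe_filter, Set.inter_comm]
      simp only [Finset.mem_Ioc]
      rfl
    rw [hN, this, Set.ncard_coe_finset, Int.Ioc_filter_modEq_card a b (Int.natCast_pos.2 hr) v]
    exact max_eq_left (sub_nonneg.2 (Int.floor_mono (by gcongr)))
  have cast_eq : (N : ℚ) = ⌊(b - v) / (r : ℚ)⌋ - ⌊(a - v) / (r : ℚ)⌋ := by
    exact_mod_cast congrArg (Int.cast (R := ℚ)) eq_floor_sub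
  have abs_le : |(N : ℚ) - (b - a) / r| ≤ 1 := by
    have hsub : ((b : ℚ) - a) / r = (b - v) / r - (a - v) / r := by ring
    rw [cast_eq, hsub, abs_le]
    constructor <;> linarith [Int.floor_le ((b - v) / (r : ℚ)), Int.floor_le ((a - v) / (r : ℚ)),
      Int.lt_floor_add_one ((b - v) / (r : ℚ)), Int.lt_floor_add_one ((a - v) / (r : ℚ))]
  exact_mod_cast abs_le

theorem hasDensity_setOf_modEq {r : ℕ} (hr : 0 < r) (v : ℤ) :
    HasDensity {n : ℤ | n ≡ v [ZMOD r]} (1 / r) := by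
  refine tendsto_iff_dist_tendsto_zero.2 <| squeeze_zero' (.of_forall fun _ => dist_nonneg) ?_ <|
    (tendsto_natCast_atTop_atTop.const_mul_atTop two_pos).const_div_atTop (1 : ℝ)
  filter_upwards [eventually_gt_atTop 0] with x hx
  have abs_le := abs_ncard_modEq_inter_Ioc_sub_le hr (neg_le_self (Int.natCast_nonneg x)) v
  have interval_length : (((x : ℤ) : ℝ) - ((-x : ℤ) : ℝ)) / r = 1 / r * (2 * x) := by
    push_cast
    ring
  have hx' : (0 : ℝ) < 2 * x := by positivity
  rw [interval_length] at abs_le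
  rwa [Real.dist_eq, div_sub' hx'.ne', abs_div, abs_of_pos hx', mul_comm (2 * x : ℝ),
    div_le_div_iff_of_pos_right hx']

theorem hasDensity_setOf_intCast_mem {r : ℕ} [NeZero r] (t : Finset (ZMod r)) :
    HasDensity {n : ℤ | (n : ZMod r) ∈ t} (t.card / r) := by
  have hasDensity_fiber : ∀ c ∈ t, HasDensity {n : ℤ | (n : ZMod r) = c} (1 / r) := by
    intro c _
    obtain ⟨v, rfl⟩ := ZMod.intCast_surjective c
    simpa only [ZMod.intCast_eq_intCast_iff] using hasDensity_setOf_modEq (NeZero.pos r) v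
  have disjoint_fiber : (t : Set (ZMod r)).PairwiseDisjoint fun c => {n : ℤ | (n : ZMod r) = c} :=
    fun c _ d _ hcd => Set.disjoint_left.2 fun n hc hd => hcd (hc.symm.trans hd)
  have iUnion_fiber : ⋃ c ∈ t, {n : ℤ | (n : ZMod r) = c} = {n : ℤ | (n : ZMod r) ∈ t} := by
    ext n
    simp only [Set.mem_iUnion, Set.mem_ofPred_eq, exists_prop, exists_eq_right']
  have hasDensity_iUnion := HasDensity.biUnion hasDensity_fiber disjoint_fiber
  rwa [iUnion_fiber, Finset.sum_const, nsmul_eq_mul, mul_one_div] at hasDensity_iUnion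

theorem hasDensity_setOf_isUnit_intCast {r : ℕ} (hr : r ≠ 0) :
    HasDensity {n : ℤ | IsUnit (n : ZMod r)} (r.totient / r) := by
  have : NeZero r := ⟨hr⟩
  let units : Finset (ZMod r) := Finset.univ.map ⟨Units.val, Units.val_injective⟩
  have mem_units (c : ZMod r) : c ∈ units ↔ IsUnit c := by
    simp only [units, Finset.mem_map, Finset.mem_univ, true_and, Function.Embedding.coeFn_mk,
      IsUnit]
  have card_units : units.card = r.totient := by
    rw [Finset.card_map, Finset.card_univ, ZMod.card_units_eq_totient]
  simpa only [mem_units, card_units] using hasDensity_setOf_intCast_mem units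

theorem HasDensity.tendsto_ncard_atTop {S : Set ℤ} {δ : ℝ} (hS : HasDensity S δ) (hδ : 0 < δ) :
    Tendsto (fun x : ℕ => (S ∩ Set.Ioc (-x : ℤ) x).ncard) atTop atTop := by
  have tendsto_two_mul : Tendsto (fun x : ℕ => (2 * x : ℝ)) atTop atTop :=
    tendsto_natCast_atTop_atTop.const_mul_atTop two_pos
  refine tendsto_natCast_atTop_iff.1 <| (Tendsto.pos_mul_atTop hδ hS tendsto_two_mul).congr' ?_
  filter_upwards [eventually_gt_atTop 0] with x hx
  exact div_mul_cancel₀ _ (by positivity)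

theorem HasDensity.tendsto_descFactorial_ncard_div {S : Set ℤ} {δ : ℝ} (hS : HasDensity S δ)
    (hδ : 0 < δ) (m : ℕ) :
    Tendsto (fun x : ℕ => ((S ∩ Set.Ioc (-x : ℤ) x).ncard.descFactorial m : ℝ) / (2 * x) ^ m)
      atTop (𝓝 (δ ^ m)) := by
  have isEquivalent := (isEquivalent_descFactorial m).comp_tendsto (hS.tendsto_ncard_atTop hδ)
  refine (isEquivalent.div .refl).symm.tendsto_nhds ((hS.pow m).congr fun x => ?_)
  exact div_pow _ _ _

end Density

section TuplesInBox

variable {m : ℕ}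

/-- The `m`-tuples of integers in the box `(-x, x] ^ m` that satisfy `P`. -/
abbrev TuplesInBox (P : (Fin m → ℤ) → Prop) (x : ℕ) : Type :=
  {h : Fin m → ℤ // (∀ i, -(x : ℤ) < h i ∧ h i ≤ x) ∧ P h}

variable (P : (Fin m → ℤ) → Prop) (x : ℕ)

theorem TuplesInBox.injective_codRestrict :
    Function.Injective fun (h : TuplesInBox P x) i => (⟨h.1 i, h.2.1 i⟩ : Set.Ioc (-x : ℤ) x) :=
  fun _ _ hgh => Subtype.ext <| funext fun i => congrArg Subtype.val (congrFun hgh i)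

instance : Finite (TuplesInBox P x) :=
  .of_injective _ (TuplesInBox.injective_codRestrict P x)

theorem natCard_tuplesInBox_le : Nat.card (TuplesInBox P x) ≤ (2 * x) ^ m := by
  have natCard_Ioc : Nat.card (Set.Ioc (-x : ℤ) x) = 2 * x := by
    have := Int.card_fintype_Ioc_of_le (-x) x (by lia)
    rw [Nat.card_eq_fintype_card]
    lia
  refine (Nat.card_le_card_of_injective _ (TuplesInBox.injective_codRestrict P x)).trans_eq ?_
  rw [Nat.card_fun, Nat.card_fin, natCard_Ioc]

variable {P} {x} {k : ℕ} {S : Set ℤ}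
  (h : ∀ y : Fin k → ℤ, Function.Injective y → (∀ i, y i ∈ S) →
    ∃ f : Fin m → Fin k, Function.Injective f ∧ P (y ∘ f))
include h

theorem descFactorial_ncard_le_mul_natCard_tuplesInBox
    (hk : k ≤ (S ∩ Set.Ioc (-x : ℤ) x).ncard) :
    (S ∩ Set.Ioc (-x : ℤ) x).ncard.descFactorial m ≤
      k.descFactorial m * Nat.card (TuplesInBox P x) := by
  let good : Set (Fin m ↪ ↥(S ∩ Set.Ioc (-x : ℤ) x)) := {g | P fun i => g i}
  have exists_good (y : Fin k ↪ ↥(S ∩ Set.Ioc (-x : ℤ) x)) :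
      ∃ f : Fin m ↪ Fin k, f.trans y ∈ good := by
    obtain ⟨f, hf, hP⟩ := h (fun i => y i) (Subtype.val_injective.comp y.injective)
      fun i => (y i).2.1
    exact ⟨⟨f, hf⟩, hP⟩
  have good_card_le : Nat.card good ≤ Nat.card (TuplesInBox P x) :=
    Nat.card_le_card_of_injective (fun g => ⟨fun i => g.1 i, fun i => (g.1 i).2.2, g.2⟩)
      fun g g' hgg' => Subtype.ext <| DFunLike.ext _ _ fun i =>
        Subtype.ext (congrFun (congrArg Subtype.val hgg') i)
  have : Finite ↥(S ∩ Set.Ioc (-x : ℤ) x) := (Set.finite_Ioc _ _).inter_of_right S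
  exact (descFactorial_natCard_le_mul hk good exists_good).trans (by gcongr)

theorem HasDensity.pow_div_descFactorial_le_liminf {δ : ℝ} (hS : HasDensity S δ) (hδ : 0 < δ) :
    δ ^ m / k.descFactorial m ≤
      liminf (fun x : ℕ => (Nat.card (TuplesInBox P x) : ℝ) / (2 * x) ^ m) atTop := by
  have tendsto_lower := (hS.tendsto_descFactorial_ncard_div hδ m).div_const (k.descFactorial m : ℝ)
  rw [← tendsto_lower.liminf_eq]
  refine liminf_le_liminf ?_ tendsto_lower.isBoundedUnder_ge <|
    IsBoundedUnder.isCoboundedUnder_ge <| isBoundedUnder_of ⟨1, fun x => ?_⟩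
  · filter_upwards [(hS.tendsto_ncard_atTop hδ).eventually_ge_atTop k] with x hx
    rw [div_right_comm]
    gcongr
    refine div_le_of_le_mul₀ (by positivity) (by positivity) ?_
    rw [mul_comm]
    exact_mod_cast descFactorial_ncard_le_mul_natCard_tuplesInBox h hx
  · exact div_le_one_of_le₀ (by exact_mod_cast natCard_tuplesInBox_le P x) (by positivity)

end TuplesInBox

theorem admissibleTuple_of_forall_isUnit_primorial {k : ℕ} {x : Fin k → ℤ}
    (hx : ∀ i, IsUnit (x i : ZMod (primorial k))) : AdmissibleTuple x := by
  intro p hp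
  have : Fact p.Prime := ⟨hp⟩
  by_cases hpk : p ≤ k
  · have p_dvd : p ∣ primorial k :=
      Finset.dvd_prod_of_mem _ <| Finset.mem_filter.2 ⟨Finset.mem_range_succ_iff.2 hpk, hp⟩
    refine ⟨0, fun i => IsUnit.ne_zero ?_⟩
    simpa only [map_intCast] using (hx i).map (ZMod.castHom p_dvd (ZMod p))
  · by_contra! surjective
    have card_le := Fintype.card_le_of_surjective (fun i => (x i : ZMod p)) surjective
    rw [ZMod.card, Fintype.card_fin] at card_le
    exact hpk card_le

theorem pow_div_mul_le_pow_div_descFactorial {a b : ℝ} (ha : 0 ≤ a) (hb : 0 ≤ b) {m k : ℕ}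
    (hmk : m ≤ k) : (a / (k * b)) ^ m ≤ (a / b) ^ m / k.descFactorial m := by
  have descFactorial_pos : 0 < k.descFactorial m := Nat.descFactorial_pos.2 hmk
  calc (a / (k * b)) ^ m = (a / b) ^ m / (k : ℝ) ^ m := by
        rw [← div_pow, div_div, mul_comm b]
    _ ≤ (a / b) ^ m / k.descFactorial m := by
        gcongr
        exact_mod_cast Nat.descFactorial_le_pow k m

theorem stmt_0_general {m k : ℕ} (P : (Fin m → ℤ) → Prop)
    (hP : ∀ x : Fin k → ℤ, Function.Injective x → AdmissibleTuple x →
      ∃ f : Fin m → Fin k, Function.Injective f ∧ P (x ∘ f)) :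
    ((primorial k).totient / primorial k : ℝ) ^ m / k.descFactorial m ≤
      liminf (fun x : ℕ =>
        (Nat.card {h : Fin m → ℤ // (∀ i, -(x : ℤ) < h i ∧ h i ≤ x) ∧ P h} : ℝ) /
          (2 * x) ^ m) atTop := by
  have primorial_pos := primorial_pos k
  exact (hasDensity_setOf_isUnit_intCast (primorial_ne_zero k)).pow_div_descFactorial_le_liminf
    (fun x hx hunit => hP x hx (admissibleTuple_of_forall_isUnit_primorial hunit)) (by positivity)

theorem stmt_0 (m k : ℕ) (hm : 1 ≤ m) (hmk : m ≤ k)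
    (hZMT : ∀ x : Fin k → ℤ, Function.Injective x → AdmissibleTuple x →
      ∃ f : Fin m → Fin k, Function.Injective f ∧ DicksonTuple (x ∘ f)) :
    (((∏ p ∈ Finset.filter Nat.Prime (Finset.range (k + 1)), p).totient : ℝ) /
        (k * ∏ p ∈ Finset.filter Nat.Prime (Finset.range (k + 1)), p)) ^ m ≤
      Filter.liminf (fun x : ℕ =>
        (Nat.card {h : Fin m → ℤ // (∀ i, -(x : ℤ) < h i ∧ h i ≤ x) ∧ DicksonTuple h} : ℝ) /
          (2 * x) ^ m) Filter.atTop :=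
  (pow_div_mul_le_pow_div_descFactorial (Nat.cast_nonneg _) (Nat.cast_nonneg _) hmk).trans
    (stmt_0_general DicksonTuple hZMT)
end

section
/- Let S be a finite set and let k, m be integers with |S| ≥ k ≥ m ≥ 1. Let D be a family of m-element subsets of S, and suppose that every k-element subset of S contains at least one member of D. Then the number T of members of D satisfies T · C(|S|−m, k−m) ≥ C(|S|, k), and consequently T ≥ (|S|/k)^m, where C(n,r) denotes the binomial coefficient. -/
/-!
Each member `d` of `D` lies in at most `C(|S| - m, k - m)` of the `k`-subsets of `S`, and every
`k`-subset contains some member, so double counting the pairs `d ⊆ K` gives the first bound. The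
second follows because `C(n, k) / C(n - m, k - m) = C(n, m) / C(k, m)` is the product of the factors
`(n - i) / (k - i)` over `i < m`, each of which is at least `n / k`.
-/

section Binomial

variable {n k : ℕ}

theorem pow_mul_descFactorial_le_pow_mul_descFactorial (hkn : k ≤ n) (m : ℕ) :
    n ^ m * k.descFactorial m ≤ k ^ m * n.descFactorial m := by
  have hfactor (i : ℕ) : n * (k - i) ≤ k * (n - i) := by
    rw [Nat.mul_sub, Nat.mul_sub, Nat.mul_comm n k]
    exact Nat.sub_le_sub_left (Nat.mul_le_mul_right i hkn) _
  simpa only [Finset.prod_mul_distrib, Finset.prod_const, Finset.card_range,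
    ← Nat.descFactorial_eq_prod_range] using
    Finset.prod_le_prod' (s := Finset.range m) fun i _ => hfactor i

theorem pow_mul_choose_le_pow_mul_choose (hkn : k ≤ n) (m : ℕ) :
    n ^ m * k.choose m ≤ k ^ m * n.choose m := by
  have h := pow_mul_descFactorial_le_pow_mul_descFactorial hkn m
  rw [Nat.descFactorial_eq_factorial_mul_choose, Nat.descFactorial_eq_factorial_mul_choose,
    Nat.mul_left_comm, Nat.mul_left_comm (k ^ m)] at h
  exact Nat.le_of_mul_le_mul_left h m.factorial_pos

theorem pow_mul_choose_sub_le_pow_mul_choose {m : ℕ} (hmk : m ≤ k) (hkn : k ≤ n) :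
    n ^ m * (n - m).choose (k - m) ≤ k ^ m * n.choose k := by
  refine Nat.le_of_mul_le_mul_right ?_ (Nat.choose_pos hmk)
  calc n ^ m * (n - m).choose (k - m) * k.choose m
      = n ^ m * k.choose m * (n - m).choose (k - m) := Nat.mul_right_comm _ _ _
    _ ≤ k ^ m * n.choose m * (n - m).choose (k - m) :=
        Nat.mul_le_mul_right _ (pow_mul_choose_le_pow_mul_choose hkn m)
    _ = k ^ m * n.choose k * k.choose m := by
        rw [Nat.mul_assoc, ← Nat.choose_mul hmk, Nat.mul_assoc]

end Binomial

section Covering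

open Finset

variable {α : Type*} {S : Finset α} {k m : ℕ}

theorem card_filter_powersetCard_subset_le [DecidableEq α] {d : Finset α} (hmd : m ≤ #d) :
    #{K ∈ S.powersetCard k | d ⊆ K} ≤ (#S - m).choose (k - m) := by
  obtain hempty | ⟨K, hK⟩ := {K ∈ S.powersetCard k | d ⊆ K}.eq_empty_or_nonempty
  · simp only [hempty, card_empty, Nat.zero_le]
  · obtain ⟨hKmem, hdK⟩ := mem_filter.mp hK
    obtain ⟨hKS, rfl⟩ := mem_powersetCard.mp hKmem
    obtain ⟨e, hed, rfl⟩ := exists_subset_card_eq hmd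
    have heK : e ⊆ K := hed.trans hdK
    calc #{L ∈ S.powersetCard #K | d ⊆ L}
        ≤ #{L ∈ S.powersetCard #K | e ⊆ L} :=
          card_le_card (monotone_filter_right _ fun _ _ hdL => hed.trans hdL)
      _ = (#S - #e).choose (#K - #e) :=
          card_filter_powersetCard_subset e S #K (heK.trans hKS) (card_le_card heK)

theorem choose_card_le_card_mul_choose_of_cover {D : Finset (Finset α)}
    (hD : ∀ d ∈ D, m ≤ #d) (hcover : ∀ K ⊆ S, #K = k → ∃ d ∈ D, d ⊆ K) :
    (#S).choose k ≤ #D * (#S - m).choose (k - m) := by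
  classical
  rw [← card_powersetCard, ← Nat.mul_one #(S.powersetCard k)]
  refine card_mul_le_card_mul (fun K d : Finset α => d ⊆ K) (fun K hK => ?_)
    fun d hd => card_filter_powersetCard_subset_le (hD d hd)
  obtain ⟨hKS, hKk⟩ := mem_powersetCard.mp hK
  obtain ⟨d, hd, hdK⟩ := hcover K hKS hKk
  exact card_pos.mpr ⟨d, mem_filter.mpr ⟨hd, hdK⟩⟩

theorem stmt_2_general {D : Finset (Finset α)} (hkS : k ≤ #S)
    (hD : ∀ d ∈ D, m ≤ #d) (hcover : ∀ K ⊆ S, #K = k → ∃ d ∈ D, d ⊆ K) :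
    (#S).choose k ≤ #D * (#S - m).choose (k - m) ∧ ((#S : ℝ) / k) ^ m ≤ #D := by
  have hcount := choose_card_le_card_mul_choose_of_cover hD hcover
  have hmk : m ≤ k := by
    obtain ⟨K, hKS, rfl⟩ := exists_subset_card_eq hkS
    obtain ⟨d, hd, hdK⟩ := hcover K hKS rfl
    exact (hD d hd).trans (card_le_card hdK)
  have hpow : #S ^ m ≤ #D * k ^ m := by
    refine Nat.le_of_mul_le_mul_right ?_ (Nat.choose_pos (Nat.sub_le_sub_right hkS m))
    calc #S ^ m * (#S - m).choose (k - m)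
        ≤ k ^ m * (#S).choose k := pow_mul_choose_sub_le_pow_mul_choose hmk hkS
      _ ≤ k ^ m * (#D * (#S - m).choose (k - m)) := Nat.mul_le_mul_left _ hcount
      _ = #D * k ^ m * (#S - m).choose (k - m) := by ring
  refine ⟨hcount, ?_⟩
  rw [div_pow]
  exact div_le_of_le_mul₀ (by positivity) (by positivity) (by exact_mod_cast hpow)

end Covering

theorem stmt_2 {α : Type*} [DecidableEq α] (S : Finset α) (k m : ℕ)
    (hm : 1 ≤ m) (hmk : m ≤ k) (hkS : k ≤ S.card)
    (D : Finset (Finset α))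
    (hD : ∀ d ∈ D, d ⊆ S ∧ d.card = m)
    (hcover : ∀ K ⊆ S, K.card = k → ∃ d ∈ D, d ⊆ K) :
    Nat.choose S.card k ≤ D.card * Nat.choose (S.card - m) (k - m) ∧
      ((S.card : ℝ) / k) ^ m ≤ D.card :=
  stmt_2_general hkS (fun d hd => (hD d hd).2.ge) hcover
end

section
/- Let ℓ ≥ 1 be an integer, let B be an admissible set of ℓ distinct integers, and let A ⊆ ℤ be a set with the property that for every integer t ∉ B such that B ∪ {t} is admissible, there exists b ∈ B with t − b ∈ A. Then the lower density of A is at least (1/ℓ) · ∏_{p ≤ ℓ+1, p prime} (1 − 1/p). -/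
open Filter

/-- A set of integers is admissible if, for every prime `p`, its elements do not
cover all residue classes mod `p`. -/
def AdmissibleSet (B : Set ℤ) : Prop :=
  ∀ p : ℕ, p.Prime → ∃ r : ZMod p, ∀ b ∈ B, (b : ZMod p) ≠ r

/-- The lower density of a set of integers: `liminf_{x → ∞} |A ∩ [1,x]| / x`. -/
noncomputable def lowerDensity (A : Set ℤ) : ℝ :=
  Filter.liminf (fun x : ℕ => (Nat.card (A ∩ Set.Icc 1 (x : ℤ) : Set ℤ) : ℝ) / x)
    Filter.atTop

/-- The upper density of a set of integers: `limsup_{x → ∞} |A ∩ [1,x]| / x`. -/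
noncomputable def upperDensity (A : Set ℤ) : ℝ :=
  Filter.limsup (fun x : ℕ => (Nat.card (A ∩ Set.Icc 1 (x : ℤ) : Set ℤ) : ℝ) / x)
    Filter.atTop

/-! Let `m` be the product of the primes `p ≤ ℓ + 1`. By the Chinese remainder theorem there is an
`r` such that `b - r` is coprime to `m` for every `b ∈ B`. If `t - r` is coprime to `m` too, then
`B ∪ {t}` misses the class of `r` modulo each prime `p ≤ ℓ + 1`, and it is too small to cover the
residue classes modulo any larger prime, so it is admissible. Hence the integers `t ∉ B` with
`t - r` coprime to `m` lie in `B + A`, a union of `ℓ` translates of `A`. Their density is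
`∏ (1 - 1 / p)`, and it is at most `ℓ` times the lower density of `A`. -/

section Density

open scoped Pointwise

variable {A T : Set ℤ}

/-- The counting function `|A ∩ [1, x]|` of a set of integers, on which the densities of `A` are
based. -/
noncomputable def countUpTo (A : Set ℤ) (x : ℕ) : ℕ :=
  (A ∩ Set.Icc 1 (x : ℤ)).ncard

lemma lowerDensity_eq_liminf_countUpTo (A : Set ℤ) :
    lowerDensity A = liminf (fun x : ℕ => (countUpTo A x : ℝ) / x) atTop :=
  rfl

lemma finite_inter_Icc {α : Type*} [Preorder α] [LocallyFiniteOrder α] (A : Set α) (a b : α) :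
    (A ∩ Set.Icc a b).Finite :=
  (Set.finite_Icc a b).inter_of_right A

lemma countUpTo_mono (h : A ⊆ T) (x : ℕ) : countUpTo A x ≤ countUpTo T x :=
  Set.ncard_le_ncard (Set.inter_subset_inter_left _ h) (finite_inter_Icc T 1 x)

lemma countUpTo_le (A : Set ℤ) (x : ℕ) : countUpTo A x ≤ x := by
  have hIcc : (Set.Icc 1 (x : ℤ)).ncard = x := by
    rw [← Finset.coe_Icc, Set.ncard_coe_finset]
    simp
  exact (Set.ncard_le_ncard Set.inter_subset_right (Set.finite_Icc _ _)).trans_eq hIcc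

lemma countUpTo_le_ncard (hA : A.Finite) (x : ℕ) : countUpTo A x ≤ A.ncard :=
  Set.ncard_le_ncard Set.inter_subset_left hA

lemma countUpTo_union_le (A T : Set ℤ) (x : ℕ) :
    countUpTo (A ∪ T) x ≤ countUpTo A x + countUpTo T x := by
  simpa only [countUpTo, Set.union_inter_distrib_right] using Set.ncard_union_le _ _

lemma countUpTo_biUnion_le {ι : Type*} (s : Finset ι) (f : ι → Set ℤ) (x : ℕ) :
    countUpTo (⋃ i ∈ s, f i) x ≤ ∑ i ∈ s, countUpTo (f i) x := by
  simpa only [countUpTo, Set.iUnion₂_inter] using s.set_ncard_biUnion_le _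

lemma ncard_vadd_inter_Icc (A : Set ℤ) (a c d : ℤ) :
    ((a +ᵥ A) ∩ Set.Icc c d).ncard = (A ∩ Set.Icc (c - a) (d - a)).ncard := by
  have hIcc : a +ᵥ Set.Icc (c - a) (d - a) = Set.Icc c d := by simp
  rw [← Set.ncard_vadd_set a (A ∩ _), Set.vadd_set_inter, hIcc]

lemma countUpTo_vadd_le (a : ℤ) (A : Set ℤ) (x : ℕ) :
    countUpTo (a +ᵥ A) x ≤ countUpTo A x + a.natAbs := by
  have hcover : A ∩ Set.Icc (1 - a) (x - a) ⊆
      (A ∩ Set.Icc 1 (x : ℤ)) ∪ (Set.Icc (1 - a) 0 ∪ Set.Icc (x + 1 : ℤ) (x - a)) := by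
    rintro t ⟨htA, htI⟩
    simp only [Set.mem_union, Set.mem_inter_iff, Set.mem_Icc, htA, true_and] at htI ⊢
    omega
  have hends : (Set.Icc (1 - a) 0 ∪ Set.Icc (x + 1 : ℤ) (x - a)).ncard ≤ a.natAbs := by
    refine (Set.ncard_union_le _ _).trans ?_
    simp only [← Finset.coe_Icc, Set.ncard_coe_finset, Int.card_Icc]
    omega
  calc countUpTo (a +ᵥ A) x = (A ∩ Set.Icc (1 - a) (x - a)).ncard := ncard_vadd_inter_Icc A a 1 x
    _ ≤ _ := Set.ncard_le_ncard hcover <|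
      (finite_inter_Icc A 1 x).union ((Set.finite_Icc _ _).union (Set.finite_Icc _ _))
    _ ≤ countUpTo A x + _ := Set.ncard_union_le _ _
    _ ≤ countUpTo A x + a.natAbs := by gcongr

lemma countUpTo_add_le (B : Finset ℤ) (A : Set ℤ) (x : ℕ) :
    countUpTo (B + A) x ≤ B.card * countUpTo A x + ∑ b ∈ B, b.natAbs :=
  calc countUpTo (B + A) x = countUpTo (⋃ b ∈ B, b +ᵥ A) x := by
        rw [← vadd_eq_add, ← Set.iUnion_vadd_set]
        rfl
    _ ≤ ∑ b ∈ B, countUpTo (b +ᵥ A) x := countUpTo_biUnion_le B _ x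
    _ ≤ ∑ b ∈ B, (countUpTo A x + b.natAbs) := by gcongr; exact countUpTo_vadd_le _ A x
    _ = B.card * countUpTo A x + ∑ b ∈ B, b.natAbs := by
        rw [Finset.sum_add_distrib, Finset.sum_const, smul_eq_mul]

lemma countUpTo_div_mem_Icc (A : Set ℤ) (x : ℕ) :
    (countUpTo A x : ℝ) / x ∈ Set.Icc (0 : ℝ) 1 :=
  ⟨by positivity, div_le_one_of_le₀ (mod_cast countUpTo_le A x) x.cast_nonneg⟩

lemma isBoundedUnder_ge_countUpTo_div (A : Set ℤ) :
    IsBoundedUnder (· ≥ ·) atTop fun x : ℕ => (countUpTo A x : ℝ) / x :=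
  isBoundedUnder_of ⟨0, fun x => (countUpTo_div_mem_Icc A x).1⟩

lemma isBoundedUnder_le_countUpTo_div (A : Set ℤ) :
    IsBoundedUnder (· ≤ ·) atTop fun x : ℕ => (countUpTo A x : ℝ) / x :=
  isBoundedUnder_of ⟨1, fun x => (countUpTo_div_mem_Icc A x).2⟩

lemma lowerDensity_le_mul_of_countUpTo_le {k K : ℝ} (hk : 0 ≤ k)
    (h : ∀ x, (countUpTo T x : ℝ) ≤ k * countUpTo A x + K) :
    lowerDensity T ≤ k * lowerDensity A := by
  let u : ℕ → ℝ := fun x => K / x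
  let v : ℕ → ℝ := fun x => k * (countUpTo A x / x)
  have hu : Tendsto u atTop (nhds 0) := tendsto_const_div_atTop_nhds_zero_nat K
  have hmul : Monotone (k * · : ℝ → ℝ) := monotone_mul_left_of_nonneg hk
  have hv_ge : IsBoundedUnder (· ≥ ·) atTop v := hmul.isBoundedUnder_ge_comp
    (isBoundedUnder_ge_countUpTo_div A)
  have hv_le : IsBoundedUnder (· ≤ ·) atTop v := hmul.isBoundedUnder_le_comp
    (isBoundedUnder_le_countUpTo_div A)
  have hv : liminf v atTop = k * lowerDensity A :=
    (hmul.map_liminf_of_continuousAt _ (continuous_const_mul k).continuousAt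
      (isBoundedUnder_le_countUpTo_div A).isCoboundedUnder_ge
      (isBoundedUnder_ge_countUpTo_div A)).symm
  have hle : ∀ x : ℕ, (countUpTo T x : ℝ) / x ≤ (u + v) x := fun x =>
    calc (countUpTo T x : ℝ) / x ≤ (k * countUpTo A x + K) / x := by gcongr; exact h x
      _ = (u + v) x := by simp only [u, v, Pi.add_apply]; ring
  calc lowerDensity T ≤ liminf (u + v) atTop :=
        liminf_le_liminf (Eventually.of_forall hle) (isBoundedUnder_ge_countUpTo_div T)
          (isBoundedUnder_le_add hu.isBoundedUnder_le hv_le).isCoboundedUnder_ge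
    _ ≤ limsup u atTop + liminf v atTop :=
        liminf_add_le hu.isBoundedUnder_ge hu.isBoundedUnder_le hv_ge hv_le.isCoboundedUnder_ge
    _ = k * lowerDensity A := by rw [hu.limsup_eq, hv, zero_add]

lemma lowerDensity_le_card_mul_of_subset {F : Set ℤ} (hF : F.Finite) (B : Finset ℤ)
    (h : T ⊆ F ∪ (B + A)) : lowerDensity T ≤ B.card * lowerDensity A := by
  refine lowerDensity_le_mul_of_countUpTo_le (K := (F.ncard + ∑ b ∈ B, b.natAbs : ℕ))
    B.card.cast_nonneg fun x => ?_
  have hcount :=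
    calc countUpTo T x ≤ countUpTo (F ∪ (B + A)) x := countUpTo_mono h x
      _ ≤ countUpTo F x + countUpTo (B + A) x := countUpTo_union_le _ _ x
      _ ≤ F.ncard + (B.card * countUpTo A x + ∑ b ∈ B, b.natAbs) :=
        add_le_add (countUpTo_le_ncard hF x) (countUpTo_add_le B A x)
      _ = B.card * countUpTo A x + (F.ncard + ∑ b ∈ B, b.natAbs) := by ring
  exact_mod_cast hcount

lemma lowerDensity_vadd (a : ℤ) (A : Set ℤ) : lowerDensity (a +ᵥ A) = lowerDensity A := by
  have hle (c : ℤ) (C : Set ℤ) : lowerDensity (c +ᵥ C) ≤ lowerDensity C := by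
    have hsubset : c +ᵥ C ⊆ ∅ ∪ (({c} : Finset ℤ) + C) := by
      rw [Set.empty_union, Finset.coe_singleton, Set.singleton_add]
      rfl
    simpa using lowerDensity_le_card_mul_of_subset Set.finite_empty {c} hsubset
  refine (hle a A).antisymm ?_
  simpa using hle (-a) (a +ᵥ A)

end Density

section Periodic

open scoped Pointwise

variable {A : Set ℤ} {m : ℕ}

lemma countUpTo_add_of_vadd_eq (hA : (m : ℤ) +ᵥ A = A) (x : ℕ) :
    countUpTo A (m + x) = countUpTo A m + countUpTo A x := by
  have hsplit : Set.Icc 1 ((m + x : ℕ) : ℤ) =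
      Set.Icc 1 (m : ℤ) ∪ Set.Icc (m + 1 : ℤ) (m + x : ℕ) := by
    ext t
    simp only [Set.mem_Icc, Set.mem_union]
    omega
  have hdisj : Disjoint (A ∩ Set.Icc 1 (m : ℤ)) (A ∩ Set.Icc (m + 1 : ℤ) (m + x : ℕ)) :=
    Set.disjoint_left.2 fun t h₁ h₂ => by linarith [h₁.2.2, h₂.2.1]
  have htail : (A ∩ Set.Icc (m + 1 : ℤ) (m + x : ℕ)).ncard = countUpTo A x := by
    nth_rw 1 [← hA]
    simp [ncard_vadd_inter_Icc, countUpTo]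
  rw [countUpTo, hsplit, Set.inter_union_distrib_left,
    Set.ncard_union_eq hdisj (finite_inter_Icc ..) (finite_inter_Icc ..), htail]
  rfl

lemma countUpTo_mul_add_of_vadd_eq (hA : (m : ℤ) +ᵥ A = A) (q r : ℕ) :
    countUpTo A (m * q + r) = q * countUpTo A m + countUpTo A r := by
  induction q with
  | zero => simp
  | succ q ih =>
    rw [show m * (q + 1) + r = m + (m * q + r) by ring, countUpTo_add_of_vadd_eq hA, ih]
    ring

lemma abs_countUpTo_sub_le_of_vadd_eq (hm : 0 < m) (hA : (m : ℤ) +ᵥ A = A) (x : ℕ) :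
    |(countUpTo A x : ℝ) - countUpTo A m / m * x| ≤ m := by
  set d : ℝ := countUpTo A m / m
  have hm' : (0 : ℝ) < m := mod_cast hm
  have hr : ((x % m : ℕ) : ℝ) ≤ m := mod_cast (Nat.mod_lt x hm).le
  have hcount : (countUpTo A (x % m) : ℝ) ≤ (x % m : ℕ) := mod_cast countUpTo_le A (x % m)
  have hd : d ∈ Set.Icc (0 : ℝ) 1 := countUpTo_div_mem_Icc A m
  have hdr : d * (x % m : ℕ) ∈ Set.Icc (0 : ℝ) (x % m : ℕ) :=
    ⟨mul_nonneg hd.1 (Nat.cast_nonneg _), mul_le_of_le_one_left (Nat.cast_nonneg _) hd.2⟩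
  have hrem : (countUpTo A x : ℝ) - d * x = countUpTo A (x % m) - d * (x % m : ℕ) := by
    have hx : (x : ℝ) = m * (x / m : ℕ) + (x % m : ℕ) := mod_cast (Nat.div_add_mod x m).symm
    have hAx : (countUpTo A x : ℝ) = (x / m : ℕ) * countUpTo A m + countUpTo A (x % m) := by
      rw [← Nat.cast_mul, ← Nat.cast_add, ← countUpTo_mul_add_of_vadd_eq hA, Nat.div_add_mod]
    have hdm : d * m = countUpTo A m := div_mul_cancel₀ _ hm'.ne'
    rw [hAx, ← hdm]
    linear_combination (-d) * hx
  rw [hrem, abs_le]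
  constructor <;> linarith [hdr.1, hdr.2, (countUpTo A (x % m)).cast_nonneg (α := ℝ)]

lemma tendsto_div_of_abs_sub_mul_le {f : ℕ → ℝ} {d K : ℝ} (h : ∀ x : ℕ, |f x - d * x| ≤ K) :
    Tendsto (fun x : ℕ => f x / x) atTop (nhds d) := by
  rw [tendsto_iff_dist_tendsto_zero]
  refine squeeze_zero' (.of_forall fun _ => dist_nonneg) ?_
    (tendsto_const_div_atTop_nhds_zero_nat K)
  filter_upwards [eventually_gt_atTop 0] with x hx
  have hx' : (0 : ℝ) < x := mod_cast hx
  rw [Real.dist_eq, div_sub' hx'.ne', abs_div, abs_of_pos hx', mul_comm (x : ℝ)]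
  gcongr
  exact h x

lemma lowerDensity_of_vadd_eq (hm : 0 < m) (hA : (m : ℤ) +ᵥ A = A) :
    lowerDensity A = countUpTo A m / m := by
  rw [lowerDensity_eq_liminf_countUpTo]
  exact (tendsto_div_of_abs_sub_mul_le (abs_countUpTo_sub_le_of_vadd_eq hm hA)).liminf_eq

lemma countUpTo_isCoprime (m : ℕ) :
    countUpTo {t : ℤ | IsCoprime t m} m = m.totient := by
  have himage : {t : ℤ | IsCoprime t m} ∩ Set.Icc 1 (m : ℤ) =
      Nat.cast '' (((Finset.Ico 1 (1 + m)).filter m.Coprime : Finset ℕ) : Set ℕ) := by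
    ext t
    simp only [Set.mem_inter_iff, Set.mem_ofPred_eq, Set.mem_Icc, Set.mem_image, Finset.mem_coe,
      Finset.mem_filter, Finset.mem_Ico]
    constructor
    · rintro ⟨hcop, ht⟩
      lift t to ℕ using by omega
      exact ⟨t, ⟨by omega, (Nat.isCoprime_iff_coprime.1 hcop).symm⟩, rfl⟩
    · rintro ⟨n, ⟨hn, hcop⟩, rfl⟩
      exact ⟨Nat.isCoprime_iff_coprime.2 hcop.symm, by omega, by omega⟩
  rw [countUpTo, himage, Set.ncard_image_of_injective _ Nat.cast_injective, Set.ncard_coe_finset,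
    Nat.filter_coprime_Ico_eq_totient]

lemma lowerDensity_isCoprime (hm : 0 < m) :
    lowerDensity {t : ℤ | IsCoprime t m} = ∏ p ∈ m.primeFactors, (1 - 1 / (p : ℝ)) := by
  have hperiodic : (m : ℤ) +ᵥ {t : ℤ | IsCoprime t m} = {t : ℤ | IsCoprime t m} := by
    ext t
    have hshift := IsCoprime.add_mul_left_left_iff (x := t) (y := (m : ℤ)) (z := -1)
    simpa [Set.mem_vadd_set_iff_neg_vadd_mem, add_comm] using hshift
  have hm' : (m : ℝ) ≠ 0 := mod_cast hm.ne'
  have htotient : (m.totient : ℝ) = m * ∏ p ∈ m.primeFactors, (1 - 1 / (p : ℝ)) := by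
    simpa using congrArg (Rat.cast : ℚ → ℝ) (Nat.totient_eq_mul_prod_factors m)
  rw [lowerDensity_of_vadd_eq hm hperiodic, countUpTo_isCoprime, htotient,
    mul_div_cancel_left₀ _ hm']

end Periodic

section Admissible

lemma exists_zmod_forall_ne_of_card_lt {C : Finset ℤ} {p : ℕ} [NeZero p] (h : C.card < p) :
    ∃ r : ZMod p, ∀ c ∈ C, (c : ZMod p) ≠ r := by
  have hcard : (C.image (Int.cast : ℤ → ZMod p)).card < (Finset.univ : Finset (ZMod p)).card := by
    simpa only [Finset.card_univ, ZMod.card] using Finset.card_image_le.trans_lt h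
  obtain ⟨r, -, hr⟩ := Finset.exists_mem_notMem_of_card_lt_card hcard
  exact ⟨r, fun c hc hcr => hr (Finset.mem_image.2 ⟨c, hc, hcr⟩)⟩

lemma AdmissibleSet.of_isCoprime_sub_primorial {C : Finset ℤ} {n : ℕ} (hn : C.card ≤ n) (r : ℤ)
    (h : ∀ c ∈ C, IsCoprime (c - r) (primorial n)) : AdmissibleSet C := by
  intro p hp
  have : NeZero p := ⟨hp.ne_zero⟩
  rcases le_or_gt p n with hpn | hpn
  · refine ⟨r, fun c hc hcr => ?_⟩
    have hdvd : (p : ℤ) ∣ c - r := (ZMod.intCast_eq_intCast_iff_dvd_sub r c p).1 hcr.symm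
    have hdvd' : (p : ℤ) ∣ primorial n := mod_cast hp.dvd_primorial_iff.2 hpn
    exact (Nat.prime_iff_prime_int.1 hp).not_isUnit ((h c hc).isUnit_of_dvd' hdvd hdvd')
  · exact exists_zmod_forall_ne_of_card_lt (hn.trans_lt hpn)

lemma exists_intCast_zmod_eq {s : Finset ℕ} (hs : ∀ n ∈ s, n ≠ 0)
    (hcop : (s : Set ℕ).Pairwise Nat.Coprime) (r : ∀ n : ℕ, ZMod n) :
    ∃ R : ℤ, ∀ n ∈ s, (R : ZMod n) = r n := by
  obtain ⟨R, hR⟩ := Nat.chineseRemainderOfFinset (fun n => (r n).val) id s hs hcop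
  refine ⟨R, fun n hn => ?_⟩
  have : NeZero n := ⟨hs n hn⟩
  simpa using (ZMod.natCast_eq_natCast_iff _ _ n).2 (hR n hn)

lemma AdmissibleSet.exists_forall_isCoprime_sub {B : Set ℤ} (hB : AdmissibleSet B) {m : ℕ}
    (hm : m ≠ 0) : ∃ r : ℤ, ∀ b ∈ B, IsCoprime (b - r) m := by
  have hclass (p : ℕ) : ∃ r : ZMod p, p.Prime → ∀ b ∈ B, (b : ZMod p) ≠ r := by
    by_cases hp : p.Prime
    · exact (hB p hp).imp fun r hr _ => hr
    · exact ⟨0, fun h => absurd h hp⟩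
  choose r hr using hclass
  have hprime : ∀ p ∈ m.primeFactors, p.Prime := fun _ => Nat.prime_of_mem_primeFactors
  obtain ⟨R, hR⟩ := exists_intCast_zmod_eq (fun p hp => (hprime p hp).ne_zero)
    (fun p hp q hq hpq => (Nat.coprime_primes (hprime p hp) (hprime q hq)).2 hpq) r
  refine ⟨R, fun b hb => Int.isCoprime_iff_gcd_eq_one.2 ?_⟩
  refine Nat.Coprime.symm (Nat.coprime_of_dvd fun p hp hpm hpb => hr p hp b hb ?_)
  rw [← hR p (Nat.mem_primeFactors.2 ⟨hp, hpm, hm⟩), eq_comm, ZMod.intCast_eq_intCast_iff_dvd_sub]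
  exact Int.natCast_dvd.2 hpb

end Admissible

open scoped Pointwise in
lemma AdmissibleSet.exists_vadd_subset {B : Finset ℤ} (hB : AdmissibleSet (B : Set ℤ)) {A : Set ℤ}
    (hA : ∀ t : ℤ, t ∉ B → AdmissibleSet (insert t (B : Set ℤ)) → ∃ b ∈ B, t - b ∈ A) :
    ∃ r : ℤ, r +ᵥ {s : ℤ | IsCoprime s (primorial (B.card + 1))} ⊆ (B : Set ℤ) ∪ (B + A) := by
  obtain ⟨r, hr⟩ := hB.exists_forall_isCoprime_sub (primorial_ne_zero (B.card + 1))
  refine ⟨r, Set.vadd_set_subset_iff.2 fun s hs => or_iff_not_imp_left.2 fun hsB => ?_⟩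
  have hadm : AdmissibleSet (insert (r + s) (B : Set ℤ)) := by
    rw [← Finset.coe_insert]
    refine .of_isCoprime_sub_primorial (Finset.card_insert_le _ _) r ?_
    exact (Finset.forall_mem_insert _ _ _).2 ⟨by simpa using hs, hr⟩
  obtain ⟨b, hb, hbA⟩ := hA (r + s) hsB hadm
  exact ⟨b, hb, r + s - b, hbA, add_sub_cancel b (r + s)⟩

theorem stmt_9 (ℓ : ℕ) (hℓ : 1 ≤ ℓ) (B : Finset ℤ) (hBcard : B.card = ℓ)
    (hBadm : AdmissibleSet ↑B) (A : Set ℤ)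
    (hA : ∀ t : ℤ, t ∉ B → AdmissibleSet (insert t (B : Set ℤ)) → ∃ b ∈ B, t - b ∈ A) :
    (1 / ℓ : ℝ) * ∏ p ∈ Finset.filter Nat.Prime (Finset.range (ℓ + 2)), (1 - 1 / (p : ℝ)) ≤
      lowerDensity A := by
  subst hBcard
  obtain ⟨r, hr⟩ := hBadm.exists_vadd_subset hA
  have hBpos : (0 : ℝ) < B.card := mod_cast hℓ
  rw [one_div_mul_eq_div, div_le_iff₀' hBpos]
  calc ∏ p ∈ Finset.filter Nat.Prime (Finset.range (B.card + 2)), (1 - 1 / (p : ℝ))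
      = lowerDensity {s : ℤ | IsCoprime s (primorial (B.card + 1))} := by
        rw [lowerDensity_isCoprime (primorial_pos _), primeFactors_primorial]
        rfl
    _ ≤ B.card * lowerDensity A := by
        rw [← lowerDensity_vadd r]
        exact lowerDensity_le_card_mul_of_subset B.finite_toSet B hr
end

section
/- Let ℓ ≥ 2 and y be integers with 1 ≤ y ≤ ℓ−1. Then there exist an admissible set B of ℓ distinct integers and a set A ⊆ ℤ whose upper density is at most (1/(ℓ−y)) · ∏_{p ≤ y, p prime} (1 − 1/p), such that for every integer t ∉ B for which B ∪ {t} is admissible, there exists b ∈ B with t − b ∈ A. -/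
open Filter

/-!
Let `N` be the primorial of `ℓ`. By the Chinese remainder theorem there are `y` integers that avoid
`0` modulo every prime `p ≤ ℓ` and represent every nonzero class modulo every prime `p ≤ y`. Add to
them the `ℓ - y` integers `N k + 1` with `y ≤ k < ℓ` to get `B`. It is admissible, since `ℓ`
elements cannot cover all classes modulo a prime `p > ℓ`. If `B ∪ {t}` is admissible, then no prime
`p ≤ y` divides `t`, since `0` is the only class modulo `p` missing from `B`. Hence `t - 1` lies in
the set `T` of all `n` with `n + 1` coprime to the primorial of `y`, which is `N`-periodic of
density `∏ (1 - 1 / p)`. Cutting `ℤ` into blocks of length `N` and keeping every `(ℓ - y)`-th block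
of `T` divides the density by `ℓ - y`, and one of the shifts `t - 1 - N k` with `y ≤ k < ℓ` lands in
a kept block.
-/

open Function

section Density

lemma count_mul_of_periodic {p : ℕ → Prop} [DecidablePred p] {M : ℕ} (hp : Periodic p M) (k : ℕ) :
    Nat.count p (M * k) = k * Nat.count p M := by
  induction k with
  | zero => simp
  | succ k ih =>
    have hshift : (fun i => p (M * k + i)) = p := by
      ext i
      rw [add_comm, mul_comm, ← smul_eq_mul, hp.nsmul k i]
    simp only [Nat.mul_succ, Nat.count_add, ih, hshift, Nat.succ_mul]

lemma tendsto_count_div_of_periodic {p : ℕ → Prop} [DecidablePred p] {M : ℕ} (hM : 0 < M)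
    (hp : Periodic p M) :
    Tendsto (fun x : ℕ => (Nat.count p x : ℝ) / x) atTop (nhds (Nat.count p M / M)) := by
  set c := Nat.count p M
  have herror : Tendsto (fun x : ℕ => (c : ℝ) / x) atTop (nhds 0) :=
    tendsto_const_div_atTop_nhds_zero_nat _
  have hlower (x : ℕ) : (x / M - 1) * c ≤ (Nat.count p x : ℝ) := by
    have hcount : x / M * c ≤ Nat.count p x := by
      rw [← count_mul_of_periodic hp]
      exact Nat.count_monotone p (Nat.mul_div_le x M)
    calc ((x : ℝ) / M - 1) * c ≤ (x / M : ℕ) * c := by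
          gcongr
          rw [← Nat.floor_div_eq_div (K := ℝ)]
          exact (Nat.sub_one_lt_floor _).le
      _ ≤ Nat.count p x := by exact_mod_cast hcount
  have hupper (x : ℕ) : (Nat.count p x : ℝ) ≤ (x / M + 1) * c := by
    have hcount : Nat.count p x ≤ (x / M + 1) * c := by
      rw [← count_mul_of_periodic hp]
      exact Nat.count_monotone p (Nat.lt_mul_div_succ x hM).le
    calc (Nat.count p x : ℝ) ≤ ((x / M : ℕ) + 1) * c := by exact_mod_cast hcount
      _ ≤ (x / M + 1) * c := by gcongr; exact Nat.cast_div_le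
  refine tendsto_of_tendsto_of_tendsto_of_le_of_le'
    (by simpa using tendsto_const_nhds.sub herror) (by simpa using tendsto_const_nhds.add herror)
    ?_ ?_ <;> filter_upwards [eventually_gt_atTop 0] with x hx
  · calc (c : ℝ) / M - c / x = (x / M - 1) * c / x := by field
      _ ≤ Nat.count p x / x := by gcongr; exact hlower x
  · calc (Nat.count p x : ℝ) / x ≤ (x / M + 1) * c / x := by gcongr; exact hupper x
      _ = c / M + c / x := by field

lemma natCard_inter_Icc_eq_count (A : Set ℤ) [DecidablePred (· ∈ A)] (x : ℕ) :
    Nat.card (A ∩ Set.Icc 1 (x : ℤ) : Set ℤ) = Nat.count (fun n : ℕ => (n + 1 : ℤ) ∈ A) x := by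
  have himage : A ∩ Set.Icc 1 (x : ℤ) =
      (fun n : ℕ => (n + 1 : ℤ)) '' ({n ∈ Finset.range x | (n + 1 : ℤ) ∈ A} : Finset ℕ) := by
    ext n
    simp only [Set.mem_inter_iff, Set.mem_Icc, Finset.coe_filter, Finset.mem_range, Set.mem_image,
      Set.mem_ofPred_eq]
    constructor
    · rintro ⟨hn, hn1, hnx⟩
      have hcast : (((n - 1).toNat : ℕ) + 1 : ℤ) = n := by omega
      exact ⟨(n - 1).toNat, ⟨by omega, by rwa [hcast]⟩, hcast⟩
    · rintro ⟨k, ⟨hkx, hk⟩, rfl⟩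
      exact ⟨hk, by omega, by omega⟩
  rw [himage, Nat.card_coe_set_eq, Set.ncard_image_of_injective _ fun i j hij => by simpa using hij,
    Set.ncard_coe_finset, Nat.count_eq_card_filter_range]

lemma upperDensity_eq_of_periodic {A : Set ℤ} {M : ℕ} (hM : 0 < M)
    (hA : Periodic (· ∈ A) (M : ℤ)) :
    upperDensity A = Nat.card (A ∩ Set.Icc 1 (M : ℤ) : Set ℤ) / M := by
  classical
  have hp : Periodic (fun n : ℕ => (n + 1 : ℤ) ∈ A) M := fun n => by
    simpa only [Nat.cast_add, add_right_comm] using hA (n + 1)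
  simpa only [upperDensity, natCard_inter_Icc_eq_count] using
    (tendsto_count_div_of_periodic hM hp).limsup_eq

lemma periodic_isCoprime_add {P M : ℕ} (hPM : P ∣ M) (a : ℤ) :
    Periodic (· ∈ {n : ℤ | IsCoprime (P : ℤ) (n + a)}) (M : ℤ) := fun n => by
  obtain ⟨c, rfl⟩ := hPM
  simp only [Set.mem_ofPred_eq, Nat.cast_mul, add_right_comm n,
    IsCoprime.add_mul_left_right_iff]

lemma upperDensity_isCoprime_add {P : ℕ} (hP : 0 < P) (a : ℤ) :
    upperDensity {n : ℤ | IsCoprime (P : ℤ) (n + a)} = P.totient / P := by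
  classical
  obtain ⟨b, hb⟩ := Int.eq_ofNat_of_zero_le (Int.emod_nonneg a (by omega : (P : ℤ) ≠ 0))
  have hcoprime (n : ℕ) : IsCoprime (P : ℤ) (n + 1 + a) ↔ P.Coprime (n + (b + 1)) := by
    have hsplit : (n + 1 + a : ℤ) = (n + (b + 1) : ℕ) + P * (a / P) := by
      push_cast
      linarith [Int.mul_ediv_add_emod a P]
    rw [hsplit, IsCoprime.add_mul_left_right_iff, Nat.isCoprime_iff_coprime]
  have hwindow : Finset.Ico (b + 1) (b + 1 + P) =
      (Finset.range P).map (addRightEmbedding (b + 1)) := by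
    rw [Finset.range_eq_Ico, Finset.map_add_right_Ico, zero_add, add_comm P]
  rw [upperDensity_eq_of_periodic hP (periodic_isCoprime_add dvd_rfl a), natCard_inter_Icc_eq_count,
    Nat.count_eq_card_filter_range, ← Nat.filter_coprime_Ico_eq_totient P (b + 1), hwindow,
    Finset.filter_map, Finset.card_map]
  simp only [Set.mem_ofPred_eq, hcoprime]
  rfl

end Density

section BlockThinning

/-- The part of `T` lying in every `m`-th of the consecutive blocks `(kN, (k+1)N]` of integers. The
blocks are shifted by one from the usual quotient classes so that `[1, N]` is one of them, matching
the windows `[1, x]` of `upperDensity`. -/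
def blockThinning (T : Set ℤ) (N m : ℕ) : Set ℤ :=
  {n ∈ T | (m : ℤ) ∣ (n - 1) / N}

variable {T : Set ℤ} {N m : ℕ}

lemma periodic_blockThinning (hN : 0 < N) (hT : Periodic (· ∈ T) (N : ℤ)) :
    Periodic (· ∈ blockThinning T N m) ((N * m : ℕ) : ℤ) := fun n => by
  have hmem : (n + (N * m : ℕ) ∈ T) = (n ∈ T) := by
    simpa only [Nat.cast_mul, mul_comm, Int.cast_natCast, Int.cast_id] using hT.int_mul m n
  have hdiv : (n + (N * m : ℕ) - 1) / (N : ℤ) = (n - 1) / N + m := by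
    rw [add_sub_right_comm, Nat.cast_mul, Int.add_mul_ediv_left _ _ (by omega)]
  simp only [blockThinning, Set.mem_ofPred_eq, hmem, hdiv, dvd_add_self_right]

lemma blockThinning_inter_Icc (hN : 0 < N) (hm : 0 < m) :
    blockThinning T N m ∩ Set.Icc 1 ((N * m : ℕ) : ℤ) = T ∩ Set.Icc 1 (N : ℤ) := by
  have hN' : (0 : ℤ) < N := by omega
  ext n
  constructor
  · rintro ⟨⟨hnT, hdvd⟩, hn1, hnx⟩
    have hlt : (n - 1) / (N : ℤ) < m := Int.ediv_lt_of_lt_mul hN' (by push_cast at hnx; lia)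
    have hzero : (n - 1) / (N : ℤ) = 0 :=
      Int.eq_zero_of_dvd_of_nonneg_of_lt (Int.ediv_nonneg (by omega) hN'.le) hlt hdvd
    have hnN : n - 1 < N := by
      simpa only [hzero, zero_add, one_mul] using Int.lt_ediv_add_one_mul_self (n - 1) hN'
    exact ⟨hnT, hn1, by omega⟩
  · rintro ⟨hnT, hn1, hnN⟩
    have hzero : (n - 1) / (N : ℤ) = 0 := Int.ediv_eq_zero_of_lt (by omega) (by omega)
    have hNm : N ≤ N * m := Nat.le_mul_of_pos_right N hm
    exact ⟨⟨hnT, by rw [hzero]; exact dvd_zero _⟩, hn1, by omega⟩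

lemma upperDensity_blockThinning (hN : 0 < N) (hm : 0 < m) (hT : Periodic (· ∈ T) (N : ℤ)) :
    upperDensity (blockThinning T N m) = upperDensity T / m := by
  rw [upperDensity_eq_of_periodic (Nat.mul_pos hN hm) (periodic_blockThinning hN hT),
    upperDensity_eq_of_periodic hN hT, blockThinning_inter_Icc hN hm, Nat.cast_mul, div_div]

lemma exists_sub_mul_mem_blockThinning (hN : 0 < N) (hm : 0 < m) (hT : Periodic (· ∈ T) (N : ℤ))
    {t : ℤ} (ht : t ∈ T) (k : ℤ) : ∃ j < m, t - N * (k + j) ∈ blockThinning T N m := by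
  have hm' : (m : ℤ) ≠ 0 := by omega
  obtain ⟨j, hj⟩ := Int.eq_ofNat_of_zero_le (Int.emod_nonneg ((t - 1) / N - k) hm')
  refine ⟨j, by have := Int.emod_lt_of_pos ((t - 1) / N - k) (b := m) (by omega); omega, ?_, ?_⟩
  · rw [mul_comm]
    exact (hT.sub_zsmul_eq (k + j)).mpr ht
  · have hdiv : (t - N * (k + j) - 1) / (N : ℤ) = ((t - 1) / N - k) - j := by
      rw [show t - N * (k + j) - 1 = t - 1 + N * -(k + j) by ring,
        Int.add_mul_ediv_left _ _ (by omega)]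
      ring
    rw [hdiv, ← hj]
    exact Int.dvd_self_sub_emod

end BlockThinning

section Admissible

lemma admissibleSet_of_forall_prime_le_card {B : Finset ℤ}
    (hB : ∀ p : ℕ, p.Prime → p ≤ B.card → ∃ r : ZMod p, ∀ b ∈ B, (b : ZMod p) ≠ r) :
    AdmissibleSet B := by
  intro p hp
  have := Fact.mk hp
  by_cases hpB : p ≤ B.card
  · exact hB p hp hpB
  · by_contra! hcover
    have himage : B.image (fun b : ℤ => (b : ZMod p)) = Finset.univ :=
      Finset.eq_univ_of_forall fun r => Finset.mem_image.2 (hcover r)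
    have hcard : p ≤ B.card := by
      simpa only [himage, Finset.card_univ, ZMod.card] using
        Finset.card_image_le (s := B) (f := fun b : ℤ => (b : ZMod p))
    exact hpB hcard

lemma AdmissibleSet.isCoprime_primorial {S : Set ℤ} (hS : AdmissibleSet S) {y : ℕ}
    (hcover : ∀ p : ℕ, p.Prime → p ≤ y → ∀ c : ZMod p, c ≠ 0 → ∃ b ∈ S, (b : ZMod p) = c)
    {t : ℤ} (ht : t ∈ S) : IsCoprime (primorial y : ℤ) t := by
  rw [Int.isCoprime_iff_nat_coprime, Int.natAbs_natCast]
  refine Nat.Coprime.symm (Nat.coprime_of_dvd fun p hp hpt hpy => ?_)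
  obtain ⟨r, hr⟩ := hS p hp
  have ht0 : (t : ZMod p) = 0 := (ZMod.intCast_zmod_eq_zero_iff_dvd _ _).2 (Int.natCast_dvd.2 hpt)
  obtain ⟨b, hb, hbr⟩ := hcover p hp (hp.dvd_primorial_iff.1 hpy) r
    fun hr0 => hr t ht (ht0.trans hr0.symm)
  exact hr b hb hbr

lemma exists_lt_primorial_forall_modEq (n : ℕ) (a : ℕ → ℕ) :
    ∃ r < primorial n, ∀ p : ℕ, p.Prime → p ≤ n → r ≡ a p [MOD p] := by
  have hne : ∀ p ∈ {p ∈ Finset.range (n + 1) | p.Prime}, id p ≠ 0 := fun p hp =>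
    (Finset.mem_filter.1 hp).2.ne_zero
  have hcoprime : Set.Pairwise ({p ∈ Finset.range (n + 1) | p.Prime} : Finset ℕ)
      (Nat.Coprime on id) := fun p hp q hq hpq =>
    (Nat.coprime_primes (Finset.mem_filter.1 hp).2 (Finset.mem_filter.1 hq).2).2 hpq
  refine ⟨_, Nat.chineseRemainderOfFinset_lt_prod a id hne hcoprime, fun p hp hpn => ?_⟩
  exact (Nat.chineseRemainderOfFinset a id _ hne hcoprime).2 p
    (Finset.mem_filter.2 ⟨Finset.mem_range.2 (by omega), hp⟩)

lemma injective_mul_add_of_lt {N : ℕ} {s : ℕ → ℕ} (hs : ∀ k, s k < N) :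
    Injective fun k => N * k + s k := by
  have hdiv (k : ℕ) : (N * k + s k) / N = k := by
    rw [Nat.mul_add_div (by have := hs k; omega), Nat.div_eq_of_lt (hs k), add_zero]
  exact LeftInverse.injective (g := (· / N)) hdiv

lemma exists_unit_residues (n : ℕ) :
    ∃ r : ℕ → ℕ, (∀ k, r k < primorial n) ∧
      ∀ p : ℕ, p.Prime → p ≤ n → (∀ k, (r k : ZMod p) ≠ 0) ∧
        ∀ c : ZMod p, c ≠ 0 → ∃ k, k + 1 < p ∧ (r k : ZMod p) = c := by
  -- Truncation at `p - 1` lists every nonzero class mod `p` in order and never returns to `0`.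
  choose r hlt hmod using fun k => exists_lt_primorial_forall_modEq n fun p => min (k + 1) (p - 1)
  refine ⟨r, hlt, fun p hp hpn => ?_⟩
  have := Fact.mk hp
  have hcast (k : ℕ) : (r k : ZMod p) = (min (k + 1) (p - 1) : ℕ) :=
    (ZMod.natCast_eq_natCast_iff _ _ _).2 (hmod k p hp hpn)
  have hp2 := hp.two_le
  refine ⟨fun k => ?_, fun c hc => ⟨c.val - 1, ?_⟩⟩
  · rw [hcast, Ne, ZMod.natCast_eq_zero_iff]
    exact Nat.not_dvd_of_pos_of_lt (by omega) (by omega)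
  · have hpos : 0 < c.val := ZMod.val_pos.2 hc
    have hcp : c.val < p := c.val_lt
    refine ⟨by omega, ?_⟩
    rw [hcast, show min (c.val - 1 + 1) (p - 1) = c.val by omega, ZMod.natCast_zmod_val]

lemma exists_injective_seq_covering_units {ℓ : ℕ} (hℓ : 2 ≤ ℓ) (y : ℕ) :
    ∃ f : ℕ → ℤ, Injective f ∧ (∀ j : ℕ, f (y + j) = primorial ℓ * (y + j) + 1) ∧
      ∀ p : ℕ, p.Prime → p ≤ ℓ → (∀ k, (f k : ZMod p) ≠ 0) ∧
        (p ≤ y → ∀ c : ZMod p, c ≠ 0 → ∃ k < y, (f k : ZMod p) = c) := by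
  obtain ⟨r, hrlt, hr⟩ := exists_unit_residues ℓ
  set N := primorial ℓ
  have hN : 1 < N := lt_of_lt_of_le (by simp) (primorial_mono hℓ)
  let s (k : ℕ) : ℕ := if k < y then r k else 1
  have hs (k : ℕ) : s k < N := by
    simp only [s]
    split_ifs
    exacts [hrlt k, hN]
  refine ⟨fun k => (N * k + s k : ℕ), Nat.cast_injective.comp (injective_mul_add_of_lt hs),
    fun j => by simp [s], fun p hp hpℓ => ?_⟩
  have := Fact.mk hp
  have hNp : (N : ZMod p) = 0 := (ZMod.natCast_eq_zero_iff _ _).2 (hp.dvd_primorial_iff.2 hpℓ)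
  have hcast (k : ℕ) : (((N * k + s k : ℕ) : ℤ) : ZMod p) = s k := by simp [hNp]
  obtain ⟨hunit, hcover⟩ := hr p hp hpℓ
  simp only [hcast, s]
  refine ⟨fun k => ?_, fun hpy c hc => ?_⟩
  · split_ifs
    exacts [hunit k, by simp]
  · obtain ⟨k, hkp, hk⟩ := hcover c hc
    have hky : k < y := by omega
    exact ⟨k, hky, by rwa [if_pos hky]⟩

end Admissible

lemma totient_primorial_div_primorial (y : ℕ) :
    ((primorial y).totient : ℝ) / primorial y =
      ∏ p ∈ Finset.filter Nat.Prime (Finset.range (y + 1)), (1 - 1 / (p : ℝ)) := by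
  have hfactors := congrArg (Rat.cast : ℚ → ℝ) (Nat.totient_eq_mul_prod_factors (primorial y))
  push_cast [primeFactors_primorial] at hfactors
  rw [hfactors, mul_div_cancel_left₀ _ (by exact_mod_cast primorial_ne_zero y)]
  simp only [one_div]
  rfl

theorem stmt_10 (ℓ y : ℕ) (hℓ : 2 ≤ ℓ) (hy : 1 ≤ y) (hyℓ : y ≤ ℓ - 1) :
    ∃ (B : Finset ℤ) (A : Set ℤ), B.card = ℓ ∧ AdmissibleSet ↑B ∧
      upperDensity A ≤
        (1 / (ℓ - y) : ℝ) * ∏ p ∈ Finset.filter Nat.Prime (Finset.range (y + 1)),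
          (1 - 1 / (p : ℝ)) ∧
      ∀ t : ℤ, t ∉ B → AdmissibleSet (insert t (B : Set ℤ)) → ∃ b ∈ B, t - b ∈ A := by
  obtain ⟨f, hf, htail, hres⟩ := exists_injective_seq_covering_units hℓ y
  set N := primorial ℓ
  have hN : 0 < N := primorial_pos ℓ
  have hm : 0 < ℓ - y := by omega
  let B := (Finset.range ℓ).image f
  let T : Set ℤ := {n | IsCoprime (primorial y : ℤ) (n + 1)}
  have hT : Periodic (· ∈ T) (N : ℤ) :=
    periodic_isCoprime_add (primorial_dvd_primorial (by omega)) _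
  have hB {k : ℕ} (hk : k < ℓ) : f k ∈ B := Finset.mem_image_of_mem f (Finset.mem_range.2 hk)
  have hcard : B.card = ℓ := by rw [Finset.card_image_of_injective _ hf, Finset.card_range]
  refine ⟨B, blockThinning T N (ℓ - y), hcard, ?_, ?_, fun t _ ht => ?_⟩
  · refine admissibleSet_of_forall_prime_le_card fun p hp hpB => ⟨0, ?_⟩
    exact Finset.forall_mem_image.2 fun k _ => (hres p hp (hcard ▸ hpB)).1 k
  · rw [upperDensity_blockThinning hN hm hT, upperDensity_isCoprime_add (primorial_pos y),
      totient_primorial_div_primorial, Nat.cast_sub (by omega), div_eq_inv_mul, one_div]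
  · have htT : t - 1 ∈ T := by
      simpa [T] using ht.isCoprime_primorial (fun p hp hpy c hc =>
        have ⟨k, hk, hkc⟩ := (hres p hp (by omega)).2 hpy c hc
        ⟨f k, Or.inr (hB (by omega)), hkc⟩) (Set.mem_insert t _)
    obtain ⟨j, hj, hmem⟩ := exists_sub_mul_mem_blockThinning hN hm hT htT y
    exact ⟨f (y + j), hB (by omega), by rwa [htail, add_comm, ← sub_sub]⟩
end
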